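/- arXiv:math/0701642 — 3 statements merged into one kernel-verified Lean document; each statement's English description precedes it below -/
import Mathlib

section
/- Let k be a field of characteristic zero and let H = ⊕_{(p,q)∈ℕ×ℕ} H^{p,q} be a bigraded k-vector space with only finitely many nonzero summands, each finite dimensional. Equip H ⊗ H with the bigrading in which (H⊗H)^{p,q} = ⊕_{p1+p2=p, q1+q2=q} H^{p1,q1} ⊗ H^{p2,q2}, and let τ : H⊗H → H⊗H be the k-linear involution determined on homogeneous elements by τ(x ⊗ y) = (-1)^{(p1+q1)(p2+q2)} y ⊗ x for x ∈ H^{p1,q1}, y ∈ H^{p2,q2}. Writing e(H)(u,v) = Σ_{p,q} (dim_k H^{p,q}) u^p v^q ∈ ℤ[u,v], the generating polynomial of the τ-invariant subspace satisfies Σ_{p,q} dim_k { z ∈ (H⊗H)^{p,q} : τ(z) = z } u^p v^q = (1/2)·( e(H)(u,v)^2 + e(H)(-u^2,-v^2) ). -/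
open scoped TensorProduct DirectSum

/-- Index set for the `(p,q)`-graded piece of `H ⊗ H`: quadruples
`((p₁,q₁),(p₂,q₂))` with `p₁+p₂ = p` and `q₁+q₂ = q`. -/
abbrev TensorIdx (p q : ℕ) : Type :=
  {i : (ℕ × ℕ) × (ℕ × ℕ) // i.1.1 + i.2.1 = p ∧ i.1.2 + i.2.2 = q}

/-- The `(p,q)`-graded piece of `H ⊗ H`:
`(H⊗H)^{p,q} = ⊕_{p₁+p₂=p, q₁+q₂=q} H^{p₁,q₁} ⊗ H^{p₂,q₂}`. -/
abbrev tensorGrade (k : Type*) [Field k] (H : ℕ × ℕ → Type*) [∀ pq, AddCommGroup (H pq)]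
    [∀ pq, Module k (H pq)] (p q : ℕ) : Type _ :=
  ⨁ i : TensorIdx p q, (H i.1.1 ⊗[k] H i.1.2)

/-- The graded involution `τ` on `(H⊗H)^{p,q}`, sending `x ⊗ y ↦ (-1)^{(p₁+q₁)(p₂+q₂)} y ⊗ x`
for `x ∈ H^{p₁,q₁}`, `y ∈ H^{p₂,q₂}`. -/
noncomputable def tauMap (k : Type*) [Field k] (H : ℕ × ℕ → Type*) [∀ pq, AddCommGroup (H pq)]
    [∀ pq, Module k (H pq)] (p q : ℕ) :
    tensorGrade k H p q →ₗ[k] tensorGrade k H p q :=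
  DirectSum.toModule k (TensorIdx p q) (tensorGrade k H p q) fun i =>
    ((-1 : k) ^ ((i.1.1.1 + i.1.1.2) * (i.1.2.1 + i.1.2.2))) •
      ((DirectSum.lof k (TensorIdx p q) (fun j => H j.1.1 ⊗[k] H j.1.2)
          ⟨(i.1.2, i.1.1),
            ⟨by rw [Nat.add_comm]; exact i.2.1, by rw [Nat.add_comm]; exact i.2.2⟩⟩).comp
        (TensorProduct.comm k (H i.1.1) (H i.1.2)).toLinearMap)

/-!
An involution `f` of a finite-dimensional space `V` in characteristic zero yields the projection
`(1 + f) / 2` onto its invariants, so `2 dim ker (f - 1) = dim V + tr f`. Since `τ` exchanges the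
summands `H^a ⊗ H^b` and `H^b ⊗ H^a`, only those with `a = b` contribute to its trace on
`(H ⊗ H)^{p,q}`. On `H^a ⊗ H^a` the swap has trace `dim H^a`, and it comes with the sign
`(-1)^(|a|²) = (-1)^|a|`, where `|(p,q)| = p + q`. Multiplying by `u^p v^q` and summing, the
dimensions give `e(u,v)²` and the traces give `e(-u²,-v²)`.
-/

section Trace

variable {R : Type*} [CommRing R]

theorem trace_tensorProduct_comm (M : Type*) [AddCommGroup M] [Module R M] [Module.Free R M]
    [Module.Finite R M] :
    LinearMap.trace R (M ⊗[R] M) (TensorProduct.comm R M M).toLinearMap = Module.finrank R M := by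
  classical
  nontriviality R
  let b := Module.Free.chooseBasis R M
  rw [LinearMap.trace_eq_matrix_trace R (b.tensorProduct b), Matrix.trace, Fintype.sum_prod_type,
    Module.finrank_eq_card_chooseBasisIndex]
  simp [LinearMap.toMatrix_apply, Finsupp.single_apply]

theorem trace_directSum_eq_sum_trace_component {ι : Type*} [Fintype ι] [DecidableEq ι]
    {M : ι → Type*} [∀ i, AddCommGroup (M i)] [∀ i, Module R (M i)] [∀ i, Module.Free R (M i)]
    [∀ i, Module.Finite R (M i)] (f : (⨁ i, M i) →ₗ[R] ⨁ i, M i) :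
    LinearMap.trace R _ f = ∑ i, LinearMap.trace R (M i)
      (DirectSum.component R ι M i ∘ₗ f ∘ₗ DirectSum.lof R ι M i) := by
  have hf : f = ∑ i, (f ∘ₗ DirectSum.lof R ι M i) ∘ₗ DirectSum.component R ι M i := by
    refine LinearMap.ext fun x => ?_
    simp only [LinearMap.sum_apply, LinearMap.comp_apply, ← map_sum]
    exact congrArg f (DirectSum.sum_univ_of x).symm
  conv_lhs => rw [hf, map_sum]
  exact Finset.sum_congr rfl fun i _ => LinearMap.trace_comp_comm' _ _

end Trace

theorem two_mul_finrank_ker_sub_id_of_involutive {k V : Type*} [Field k] [NeZero (2 : k)]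
    [AddCommGroup V] [Module k V] [FiniteDimensional k V] {f : V →ₗ[k] V}
    (hf : Function.Involutive f) :
    2 * (Module.finrank k (LinearMap.ker (f - LinearMap.id)) : k) =
      Module.finrank k V + LinearMap.trace k V f := by
  have hproj : LinearMap.IsProj (LinearMap.ker (f - LinearMap.id))
      ((2⁻¹ : k) • (LinearMap.id + f)) := by
    refine ⟨fun x => ?_, fun x hx => ?_⟩
    · simp [hf x, add_comm]
    · have hfx : f x = x := sub_eq_zero.mp hx
      rw [LinearMap.smul_apply, LinearMap.add_apply, LinearMap.id_apply, hfx, ← two_smul k x,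
        inv_smul_smul₀ two_ne_zero]
  rw [← hproj.trace, map_smul, map_add, LinearMap.trace_id, smul_eq_mul,
    mul_inv_cancel_left₀ two_ne_zero]

theorem neg_one_pow_mul_self {R : Type*} [Monoid R] [HasDistribNeg R] (m : ℕ) :
    (-1 : R) ^ (m * m) = (-1) ^ m :=
  neg_one_pow_congr (by simp [Nat.even_mul])

instance TensorIdx.instFintype (p q : ℕ) : Fintype (TensorIdx p q) :=
  Fintype.subtype
    ((Finset.HasAntidiagonal.antidiagonal p ×ˢ Finset.HasAntidiagonal.antidiagonal q).map
      (Equiv.prodProdProdComm ℕ ℕ ℕ ℕ).toEmbedding)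
    fun i => by simp [Finset.mem_map_equiv]

section Tau

variable (k : Type*) [Field k] (H : ℕ × ℕ → Type*) [∀ pq, AddCommGroup (H pq)]
  [∀ pq, Module k (H pq)] {p q : ℕ} {a b : ℕ × ℕ}

theorem bidegree_swap (h : a.1 + b.1 = p ∧ a.2 + b.2 = q) : b.1 + a.1 = p ∧ b.2 + a.2 = q := by
  omega

/-- The inclusion of the summand `H^a ⊗ H^b` into `(H ⊗ H)^{p,q}`, where `a + b = (p,q)`. -/
noncomputable def tensorIncl (h : a.1 + b.1 = p ∧ a.2 + b.2 = q) :
    H a ⊗[k] H b →ₗ[k] tensorGrade k H p q :=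
  DirectSum.lof k (TensorIdx p q) (fun i => H i.1.1 ⊗[k] H i.1.2) ⟨(a, b), h⟩

/-- The projection of `(H ⊗ H)^{p,q}` onto its summand `H^a ⊗ H^b`, where `a + b = (p,q)`. -/
noncomputable def tensorProj (h : a.1 + b.1 = p ∧ a.2 + b.2 = q) :
    tensorGrade k H p q →ₗ[k] H a ⊗[k] H b :=
  DirectSum.component k (TensorIdx p q) (fun i => H i.1.1 ⊗[k] H i.1.2) ⟨(a, b), h⟩

theorem tensorProj_comp_tensorIncl_self (h : a.1 + b.1 = p ∧ a.2 + b.2 = q) :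
    tensorProj k H h ∘ₗ tensorIncl k H h = LinearMap.id :=
  DirectSum.component_comp_lof_same ..

theorem tensorProj_comp_tensorIncl_swap_of_ne (h : a.1 + b.1 = p ∧ a.2 + b.2 = q) (hab : a ≠ b) :
    tensorProj k H h ∘ₗ tensorIncl k H (bidegree_swap h) = 0 := by
  have hne : (⟨(b, a), bidegree_swap h⟩ : TensorIdx p q) ≠ ⟨(a, b), h⟩ := fun heq =>
    hab (congrArg (fun i => i.1.2) heq)
  exact (DirectSum.component_comp_lof ..).trans (dif_neg hne)

theorem tauMap_comp_tensorIncl (h : a.1 + b.1 = p ∧ a.2 + b.2 = q) :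
    tauMap k H p q ∘ₗ tensorIncl k H h = (-1 : k) ^ ((a.1 + a.2) * (b.1 + b.2)) •
      tensorIncl k H (bidegree_swap h) ∘ₗ (TensorProduct.comm k (H a) (H b)).toLinearMap := by
  refine LinearMap.ext fun z => ?_
  rw [LinearMap.comp_apply, tauMap, tensorIncl, DirectSum.toModule_lof]
  rfl

theorem tauMap_tensorIncl_tmul (h : a.1 + b.1 = p ∧ a.2 + b.2 = q) (x : H a) (y : H b) :
    tauMap k H p q (tensorIncl k H h (x ⊗ₜ y)) =
      (-1 : k) ^ ((a.1 + a.2) * (b.1 + b.2)) • tensorIncl k H (bidegree_swap h) (y ⊗ₜ x) :=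
  LinearMap.congr_fun (tauMap_comp_tensorIncl k H h) (x ⊗ₜ y)

theorem tauMap_involutive : Function.Involutive (tauMap k H p q) := by
  suffices h : tauMap k H p q ∘ₗ tauMap k H p q = LinearMap.id from LinearMap.congr_fun h
  refine DirectSum.linearMap_ext k fun ⟨(a, b), h⟩ => TensorProduct.ext' fun x y => ?_
  change tauMap k H p q (tauMap k H p q (tensorIncl k H h (x ⊗ₜ y))) =
    tensorIncl k H h (x ⊗ₜ y)
  rw [tauMap_tensorIncl_tmul, map_smul, tauMap_tensorIncl_tmul, smul_smul,
    mul_comm (b.1 + b.2), ← mul_pow, neg_one_mul, neg_neg, one_pow, one_smul]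

variable [∀ pq, FiniteDimensional k (H pq)]

theorem trace_tensorProj_comp_tauMap_comp_tensorIncl (h : a.1 + b.1 = p ∧ a.2 + b.2 = q) :
    LinearMap.trace k _ (tensorProj k H h ∘ₗ tauMap k H p q ∘ₗ tensorIncl k H h) =
      if a = b then (-1 : k) ^ (a.1 + a.2) * Module.finrank k (H a) else 0 := by
  rw [tauMap_comp_tensorIncl, LinearMap.comp_smul, ← LinearMap.comp_assoc]
  split_ifs with hab
  · subst hab
    rw [tensorProj_comp_tensorIncl_self, LinearMap.id_comp, map_smul, trace_tensorProduct_comm,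
      neg_one_pow_mul_self, smul_eq_mul]
  · rw [tensorProj_comp_tensorIncl_swap_of_ne k H h hab, LinearMap.zero_comp, smul_zero, map_zero]

theorem trace_tauMap :
    LinearMap.trace k _ (tauMap k H p q) = ∑ i : TensorIdx p q,
      if i.1.1 = i.1.2 then (-1 : k) ^ (i.1.1.1 + i.1.1.2) * Module.finrank k (H i.1.1) else 0 :=
  (trace_directSum_eq_sum_trace_component _).trans <|
    Finset.sum_congr rfl fun i _ => trace_tensorProj_comp_tauMap_comp_tensorIncl k H i.2

theorem finrank_tensorGrade :
    Module.finrank k (tensorGrade k H p q) =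
      ∑ i : TensorIdx p q, Module.finrank k (H i.1.1) * Module.finrank k (H i.1.2) := by
  simp only [Module.finrank_directSum, Module.finrank_tensorProduct]

theorem two_mul_finrank_ker_tauMap_sub_id [CharZero k] :
    2 * (Module.finrank k (LinearMap.ker (tauMap k H p q - LinearMap.id)) : ℤ) =
      ∑ i : TensorIdx p q, ((Module.finrank k (H i.1.1) * Module.finrank k (H i.1.2) : ℤ) +
        if i.1.1 = i.1.2 then (-1) ^ (i.1.1.1 + i.1.1.2) * (Module.finrank k (H i.1.1) : ℤ)
        else 0) := by
  have htrace := two_mul_finrank_ker_sub_id_of_involutive (tauMap_involutive k H (p := p) (q := q))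
  rw [trace_tauMap, finrank_tensorGrade] at htrace
  apply Int.cast_injective (α := k)
  push_cast at htrace ⊢
  rw [htrace, Finset.sum_add_distrib]

end Tau

theorem sum_range_sum_tensorIdx {M : Type*} [AddCommMonoid M] {m n : ℕ}
    {S : Finset ((ℕ × ℕ) × (ℕ × ℕ))} (hS : ∀ i ∈ S, i.1.1 + i.2.1 < m ∧ i.1.2 + i.2.2 < n)
    {F : (ℕ × ℕ) × (ℕ × ℕ) → M} (hF : ∀ i ∉ S, F i = 0) :
    ∑ p ∈ Finset.range m, ∑ q ∈ Finset.range n, ∑ i : TensorIdx p q, F i.1 = ∑ i ∈ S, F i := by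
  have hfiber (p q : ℕ) : ∑ i : TensorIdx p q, F i.1 =
      ∑ i ∈ S with (i.1.1 + i.2.1, i.1.2 + i.2.2) = (p, q), F i := by
    calc ∑ i : TensorIdx p q, F i.1
      _ = ∑ i ∈ (Finset.univ : Finset (TensorIdx p q)).map (.subtype _), F i := by
        simp only [Finset.sum_map, Function.Embedding.subtype_apply]
      _ = ∑ i ∈ S with (i.1.1 + i.2.1, i.1.2 + i.2.2) = (p, q), F i :=
        (Finset.sum_subset (fun i hi => by simp_all) fun i hi hiS =>
          hF i fun hi' => by simp_all).symm
  have hmaps : ∀ i ∈ S, (i.1.1 + i.2.1, i.1.2 + i.2.2) ∈ Finset.range m ×ˢ Finset.range n := by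
    simpa using hS
  simp only [hfiber]
  rw [← Finset.sum_product', Finset.sum_fiberwise_of_maps_to hmaps]

theorem sum_range_sum_tensorIdx_mul_add_diagonal {R : Type*} [CommSemiring R] {n : ℕ}
    {f g : ℕ × ℕ → R} (hf : ∀ a ∉ Finset.range n ×ˢ Finset.range n, f a = 0)
    (hg : ∀ a ∉ Finset.range n ×ˢ Finset.range n, g a = 0) :
    ∑ p ∈ Finset.range (2 * n), ∑ q ∈ Finset.range (2 * n), ∑ i : TensorIdx p q,
        (f i.1.1 * f i.1.2 + if i.1.1 = i.1.2 then g i.1.1 else 0) =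
      (∑ p ∈ Finset.range n, ∑ q ∈ Finset.range n, f (p, q)) ^ 2 +
        ∑ p ∈ Finset.range n, ∑ q ∈ Finset.range n, g (p, q) := by
  set B := Finset.range n ×ˢ Finset.range n with hB
  have hsum : ∀ i ∈ B ×ˢ B, i.1.1 + i.2.1 < 2 * n ∧ i.1.2 + i.2.2 < 2 * n := by
    simp only [hB, Finset.mem_product, Finset.mem_range]
    omega
  have hsupport : ∀ i ∉ B ×ˢ B, (f i.1 * f i.2 + if i.1 = i.2 then g i.1 else 0) = 0 := by
    rintro ⟨a, b⟩ hab
    rcases not_and_or.mp (mt Finset.mem_product.mpr hab) with ha | hb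
    · simp [hf a ha, hg a ha]
    · have hdiag : (if a = b then g a else 0) = 0 :=
        ite_eq_right_iff.mpr fun h => hg a (h ▸ hb)
      simp [hf b hb, hdiag]
  have hdiagonal : ∑ i ∈ B ×ˢ B, (if i.1 = i.2 then g i.1 else 0) = ∑ a ∈ B, g a := by
    simp +contextual [Finset.sum_product]
  rw [sum_range_sum_tensorIdx hsum hsupport, Finset.sum_add_distrib, hdiagonal]
  simp only [hB, ← Finset.sum_product', sq, Finset.sum_mul_sum]

section HodgePolynomial

variable (k : Type*) [Field k] (H : ℕ × ℕ → Type*) [∀ pq, AddCommGroup (H pq)]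
  [∀ pq, Module k (H pq)] {R : Type*} [CommRing R] (u v : R)

/-- The term `dim H^{p,q} u^p v^q` of the polynomial `e(H)(u,v)` at `a = (p,q)`. -/
noncomputable def hodgeTerm (a : ℕ × ℕ) : R :=
  Module.finrank k (H a) * u ^ a.1 * v ^ a.2

theorem hodgeTerm_neg_sq (a : ℕ × ℕ) :
    hodgeTerm k H (-(u ^ 2)) (-(v ^ 2)) a =
      (-1) ^ (a.1 + a.2) * Module.finrank k (H a) * u ^ (a.1 + a.1) * v ^ (a.2 + a.2) := by
  rw [hodgeTerm, neg_pow (u ^ 2), neg_pow (v ^ 2)]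
  ring

variable [∀ pq, FiniteDimensional k (H pq)] [CharZero k]

theorem two_mul_finrank_ker_tauMap_sub_id_mul_pow (p q : ℕ) :
    2 * ((Module.finrank k (LinearMap.ker (tauMap k H p q - LinearMap.id)) : R) * u ^ p * v ^ q) =
      ∑ i : TensorIdx p q, (hodgeTerm k H u v i.1.1 * hodgeTerm k H u v i.1.2 +
        if i.1.1 = i.1.2 then hodgeTerm k H (-(u ^ 2)) (-(v ^ 2)) i.1.1 else 0) := by
  have hdim := congrArg (Int.cast : ℤ → R) (two_mul_finrank_ker_tauMap_sub_id k H (p := p) (q := q))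
  push_cast at hdim
  rw [← mul_assoc, ← mul_assoc, hdim, Finset.sum_mul, Finset.sum_mul]
  refine Finset.sum_congr rfl fun ⟨(a, b), hp, hq⟩ _ => ?_
  dsimp only at hp hq ⊢
  subst hp hq
  split_ifs with hab
  · subst hab
    rw [hodgeTerm_neg_sq, hodgeTerm]
    ring
  · simp only [hodgeTerm]
    ring

theorem invariant_dim_generating_polynomial_general (n : ℕ)
    (hH : ∀ pq : ℕ × ℕ, n ≤ pq.1 ∨ n ≤ pq.2 → Module.finrank k (H pq) = 0) :
    2 * ∑ p ∈ Finset.range (2 * n), ∑ q ∈ Finset.range (2 * n),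
        (Module.finrank k (LinearMap.ker (tauMap k H p q - LinearMap.id)) : R) * u ^ p * v ^ q =
      (∑ p ∈ Finset.range n, ∑ q ∈ Finset.range n,
          (Module.finrank k (H (p, q)) : R) * u ^ p * v ^ q) ^ 2 +
        ∑ p ∈ Finset.range n, ∑ q ∈ Finset.range n,
          (Module.finrank k (H (p, q)) : R) * (-(u ^ 2)) ^ p * (-(v ^ 2)) ^ q := by
  have hterm (s t : R) : ∀ a ∉ Finset.range n ×ˢ Finset.range n, hodgeTerm k H s t a = 0 := by
    intro a ha
    have hdim : Module.finrank k (H a) = 0 := hH a (by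
      simpa only [Finset.mem_product, Finset.mem_range, not_and_or, not_lt] using ha)
    simp [hodgeTerm, hdim]
  simp only [Finset.mul_sum, two_mul_finrank_ker_tauMap_sub_id_mul_pow]
  exact sum_range_sum_tensorIdx_mul_add_diagonal (hterm u v) (hterm (-(u ^ 2)) (-(v ^ 2)))

end HodgePolynomial

/-- **Lemma 2.6 of the paper (linear-algebraic content).**
Let `H = ⊕_{(p,q)} H^{p,q}` be a bigraded vector space over a field of characteristic zero,
with only finitely many nonzero summands (all of them vanish when `p ≥ n` or `q ≥ n`), each
finite dimensional.  With `τ` the graded involution on `H ⊗ H` and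
`e(H)(u,v) = Σ dim H^{p,q} u^p v^q`, the generating polynomial of the `τ`-invariant
subspace satisfies
`Σ_{p,q} dim {z ∈ (H⊗H)^{p,q} : τ z = z} u^p v^q = ½ (e(H)(u,v)² + e(H)(-u²,-v²))`. -/
theorem invariant_dim_generating_polynomial (k : Type) [Field k] [CharZero k]
    (H : ℕ × ℕ → Type) [∀ pq, AddCommGroup (H pq)] [∀ pq, Module k (H pq)]
    [∀ pq, FiniteDimensional k (H pq)]
    (n : ℕ) (hH : ∀ pq : ℕ × ℕ, n ≤ pq.1 ∨ n ≤ pq.2 → Module.finrank k (H pq) = 0) :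
    ∑ p ∈ Finset.range (2 * n), ∑ q ∈ Finset.range (2 * n),
        (Module.finrank k ↥(LinearMap.ker (tauMap k H p q - LinearMap.id)) :
            MvPolynomial (Fin 2) ℚ) *
          MvPolynomial.X 0 ^ p * MvPolynomial.X 1 ^ q =
      MvPolynomial.C (1 / 2 : ℚ) *
        ((∑ p ∈ Finset.range n, ∑ q ∈ Finset.range n,
            (Module.finrank k (H (p, q)) : MvPolynomial (Fin 2) ℚ) *
              MvPolynomial.X 0 ^ p * MvPolynomial.X 1 ^ q) ^ 2 +
          ∑ p ∈ Finset.range n, ∑ q ∈ Finset.range n,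
            (Module.finrank k (H (p, q)) : MvPolynomial (Fin 2) ℚ) *
              (-(MvPolynomial.X 0 ^ 2)) ^ p * (-(MvPolynomial.X 1 ^ 2)) ^ q) := by
  have half_mul_two : MvPolynomial.C (1 / 2 : ℚ) * 2 = (1 : MvPolynomial (Fin 2) ℚ) := by
    rw [← map_ofNat MvPolynomial.C 2, ← map_mul, one_div_mul_cancel two_ne_zero, map_one]
  rw [← invariant_dim_generating_polynomial_general k H _ _ n hH, ← mul_assoc, half_mul_two,
    one_mul]
end

section
/- Let g ≥ 2 be an integer. In ℚ(u,v), with q := uv, J := (1+u)^g(1+v)^g, S := (1+u^2v)^g(1+uv^2)^g, K := (1-u^2)^g(1-v^2)^g and e_n := (1-q^n)/(1-q), set M := ( 2·J·S − J^2·(1 + 2q^{g+1} − q^2) − K·(1-q)^2 ) / ( 2(1-q)(1-q^2) ). Then the following identity holds: J^2/((1-q)^2(1-q^2)) · [ S·(1-q^{2g}) + J·( q^{3g-1} + q^{2g+1} − q^{2g-1} − q^{g+1} ) ] = M·J·e_{2g} + J^2·(J-1)·e_{g-1}·(e_{2g} − e_g) + J^2·e_g^2·(e_g − e_{g-1}) +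 (1/2)·J·( J^2·e_g^2 + K·(1-q^{2g})/(1-q^2) ) − (1/2)·J^2·( e_g^2 + (1-q^{2g})/(1-q^2) ) + J^2·(1-q^{g-1})(1-q^g)/((1-q^2)(1-q)). -/
noncomputable section

/-- The field `ℚ(u,v)` of rational functions in two indeterminates over `ℚ`. -/
abbrev Kf : Type := FractionRing (MvPolynomial (Fin 2) ℚ)

/-- The indeterminate `u` in `ℚ(u,v)`. -/
def uu : Kf := algebraMap (MvPolynomial (Fin 2) ℚ) Kf (MvPolynomial.X 0)

/-- The indeterminate `v` in `ℚ(u,v)`. -/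
def vv : Kf := algebraMap (MvPolynomial (Fin 2) ℚ) Kf (MvPolynomial.X 1)

/-- `q := uv`. -/
def qq : Kf := uu * vv

/-- `J := (1+u)^g (1+v)^g`. -/
def Jg (g : ℕ) : Kf := (1 + uu) ^ g * (1 + vv) ^ g

/-- `S := (1+u²v)^g (1+uv²)^g`. -/
def Sg (g : ℕ) : Kf := (1 + uu ^ 2 * vv) ^ g * (1 + uu * vv ^ 2) ^ g

/-- `K := (1-u²)^g (1-v²)^g`. -/
def Kg (g : ℕ) : Kf := (1 - uu ^ 2) ^ g * (1 - vv ^ 2) ^ g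

/-- `e_n := (1-qⁿ)/(1-q)`. -/
def ee (n : ℕ) : Kf := (1 - qq ^ n) / (1 - qq)

/-!
Both sides are polynomials in `J`, `S`, `K` over the field generated by `q`, and the identity holds
coefficientwise. The coefficients of `J ^ 2 * S` and `J * K` match on sight, and that of `J ^ 3`
becomes a polynomial identity in `q` and `q ^ (g - 1)` once the common factor `e_g` is removed.
The coefficient of `J ^ 2` vanishes because
`(e_g ^ 2 + (1 - q ^ (2 * g)) / (1 - q ^ 2)) / 2` is the Gaussian binomial `[g + 1 choose 2]`, so
that the claim is `q`-Pascal's rule `[g + 1 choose 2] = [g choose 2] + q ^ (g - 1) * e_g`.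
-/

section Field

variable {F : Type*} [Field F] {q : F}

/-- The `q`-number `1 + q + ⋯ + q ^ (n - 1)`, the Hodge polynomial of `ℙ ^ (n - 1)` when `q = uv`.
The closed form is used, so the value at `q = 1` is the junk value `0`. -/
def qNum (q : F) (n : ℕ) : F := (1 - q ^ n) / (1 - q)

/-- The Gaussian binomial coefficient `[n choose 2]`, the Hodge polynomial of `Gr(2, n)` when
`q = uv`. The truncated subtraction is harmless, since the other factor vanishes at `n = 0`; the
value at `q ^ 2 = 1` is the junk value `0`. -/
def qChooseTwo (q : F) (n : ℕ) : F :=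
  (1 - q ^ (n - 1)) * (1 - q ^ n) / ((1 - q ^ 2) * (1 - q))

theorem qNum_add (q : F) (m n : ℕ) : qNum q (m + n) = qNum q m + q ^ m * qNum q n := by
  simp only [qNum]
  ring

theorem qNum_two_mul (q : F) (n : ℕ) : qNum q (2 * n) = (1 + q ^ n) * qNum q n := by
  rw [two_mul, qNum_add]
  ring

theorem qNum_one (hq : q ≠ 1) : qNum q 1 = 1 := by
  rw [qNum, pow_one, div_self (sub_ne_zero.mpr hq.symm)]

theorem qNum_succ (hq : q ≠ 1) (n : ℕ) : qNum q (n + 1) = qNum q n + q ^ n := by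
  rw [qNum_add, qNum_one hq, mul_one]

theorem qNum_succ' (hq : q ≠ 1) (n : ℕ) : qNum q (n + 1) = 1 + q * qNum q n := by
  rw [add_comm, qNum_add, qNum_one hq, pow_one]

theorem one_add_ne_zero_of_sq_ne_one (hq : q ^ 2 ≠ 1) : 1 + q ≠ 0 := fun h =>
  hq (by linear_combination (q - 1) * h)

theorem qChooseTwo_succ (q : F) (n : ℕ) :
    qChooseTwo q (n + 1) = qNum q n * qNum q (n + 1) / (1 + q) := by
  have hfactor : 1 - q ^ 2 = (1 - q) * (1 + q) := by ring
  simp only [qChooseTwo, qNum, Nat.add_sub_cancel, hfactor]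
  field_simp

theorem qChooseTwo_pascal (hq : q ^ 2 ≠ 1) (n : ℕ) :
    qChooseTwo q (n + 2) = qChooseTwo q (n + 1) + q ^ n * qNum q (n + 1) := by
  have hq1 := (sq_ne_one_iff.mp hq).1
  have hadd := one_add_ne_zero_of_sq_ne_one hq
  rw [qChooseTwo_succ, qChooseTwo_succ, qNum_succ hq1 (n + 1), qNum_succ hq1 n]
  field_simp
  ring

-- The left-hand side is the Hodge polynomial of `Sym² ℙ ^ (n - 1)`.
theorem half_mul_qNum_sq_add_qNum_sq [NeZero (2 : F)] (hq : 1 + q ≠ 0) (n : ℕ) :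
    1 / 2 * (qNum q n ^ 2 + qNum (q ^ 2) n) = qChooseTwo q (n + 1) := by
  have hfactor : 1 - q ^ 2 = (1 - q) * (1 + q) := by ring
  rw [qChooseTwo_succ]
  simp only [qNum, hfactor]
  field_simp
  ring

theorem coeff_J_sq_eq_zero [NeZero (2 : F)] (hq : q ^ 2 ≠ 1) (n : ℕ) :
    -(qNum q n * (qNum q (2 * (n + 1)) - qNum q (n + 1))) +
        qNum q (n + 1) ^ 2 * (qNum q (n + 1) - qNum q n) -
        1 / 2 * (qNum q (n + 1) ^ 2 + qNum (q ^ 2) (n + 1)) + qChooseTwo q (n + 1) = 0 := by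
  have hq1 := (sq_ne_one_iff.mp hq).1
  have hadd := one_add_ne_zero_of_sq_ne_one hq
  rw [half_mul_qNum_sq_add_qNum_sq hadd, qChooseTwo_pascal hq, qNum_two_mul]
  linear_combination qNum q (n + 1) ^ 2 * qNum_succ hq1 n +
    q ^ n * qNum q (n + 1) * qNum_succ' hq1 n

theorem coeff_J_cube_eq [NeZero (2 : F)] (hq : q ^ 2 ≠ 1) (n : ℕ) :
    (q ^ (3 * n + 2) + q ^ (2 * (n + 1) + 1) - q ^ (2 * n + 1) - q ^ (n + 1 + 1)) /
        ((1 - q) ^ 2 * (1 - q ^ 2)) =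
      -((1 + 2 * q ^ (n + 1 + 1) - q ^ 2) / (2 * (1 - q) * (1 - q ^ 2)) *
          qNum q (2 * (n + 1))) +
        qNum q n * (qNum q (2 * (n + 1)) - qNum q (n + 1)) + 1 / 2 * qNum q (n + 1) ^ 2 := by
  have hcofactor : -(q ^ (n + 1) * (q ^ n + q)) / ((1 - q) * (1 - q ^ 2)) =
      -((1 + 2 * q ^ (n + 1 + 1) - q ^ 2) * (1 + q ^ (n + 1)) / (2 * (1 - q) * (1 - q ^ 2))) +
        q ^ (n + 1) * qNum q n + 1 / 2 * qNum q (n + 1) := by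
    rw [qNum, qNum]
    field_simp
    ring
  calc
    _ = -(q ^ (n + 1) * (q ^ n + q)) / ((1 - q) * (1 - q ^ 2)) * qNum q (n + 1) := by
      rw [qNum]
      field_simp
      ring
    _ = _ := by
      rw [hcofactor, qNum_two_mul]
      ring

theorem coeff_J_sq_mul_S_eq [NeZero (2 : F)] (q : F) (m : ℕ) :
    (1 - q ^ m) / ((1 - q) ^ 2 * (1 - q ^ 2)) =
      2 / (2 * (1 - q) * (1 - q ^ 2)) * qNum q m := by
  rw [mul_assoc, div_mul_cancel_left₀ (NeZero.ne 2), qNum]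
  field_simp

theorem coeff_J_mul_K_eq_zero (hq : q ≠ 1) (n : ℕ) :
    -((1 - q) ^ 2 / (2 * (1 - q) * (1 - q ^ 2)) * qNum q (2 * n)) +
      1 / 2 * qNum (q ^ 2) n = 0 := by
  rw [qNum, qNum, ← pow_mul]
  field_simp
  ring

theorem theoremA_algebraic_core_general [NeZero (2 : F)] (hq : q ^ 2 ≠ 1) (J S K : F) {g : ℕ}
    (hg : 1 ≤ g) :
    J ^ 2 / ((1 - q) ^ 2 * (1 - q ^ 2)) *
        (S * (1 - q ^ (2 * g)) +
          J * (q ^ (3 * g - 1) + q ^ (2 * g + 1) - q ^ (2 * g - 1) - q ^ (g + 1))) =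
      ((2 * J * S - J ^ 2 * (1 + 2 * q ^ (g + 1) - q ^ 2) - K * (1 - q) ^ 2) /
          (2 * (1 - q) * (1 - q ^ 2))) * J * qNum q (2 * g) +
        J ^ 2 * (J - 1) * qNum q (g - 1) * (qNum q (2 * g) - qNum q g) +
        J ^ 2 * qNum q g ^ 2 * (qNum q g - qNum q (g - 1)) +
        1 / 2 * J * (J ^ 2 * qNum q g ^ 2 + K * (1 - q ^ (2 * g)) / (1 - q ^ 2)) -
        1 / 2 * J ^ 2 * (qNum q g ^ 2 + (1 - q ^ (2 * g)) / (1 - q ^ 2)) +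
        J ^ 2 * (1 - q ^ (g - 1)) * (1 - q ^ g) / ((1 - q ^ 2) * (1 - q)) := by
  obtain ⟨n, rfl⟩ : ∃ n, g = n + 1 := ⟨g - 1, by omega⟩
  have hexp_three : 3 * (n + 1) - 1 = 3 * n + 2 := by omega
  have hexp_two : 2 * (n + 1) - 1 = 2 * n + 1 := by omega
  have hJ2 := coeff_J_sq_eq_zero hq n
  have hJK := coeff_J_mul_K_eq_zero (sq_ne_one_iff.mp hq).1 (n + 1)
  rw [qNum.eq_def (q ^ 2), ← pow_mul] at hJ2 hJK
  rw [qChooseTwo] at hJ2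
  rw [hexp_three, hexp_two]
  rw [Nat.add_sub_cancel] at hJ2 ⊢
  linear_combination J ^ 2 * S * coeff_J_sq_mul_S_eq q (2 * (n + 1)) +
    J ^ 3 * coeff_J_cube_eq hq n - J ^ 2 * hJ2 - J * K * hJK

end Field

theorem qq_pow_ne_one {n : ℕ} (hn : n ≠ 0) : qq ^ n ≠ 1 := by
  intro h
  have hpoly : (MvPolynomial.X 0 * MvPolynomial.X 1 : MvPolynomial (Fin 2) ℚ) ^ n = 1 := by
    apply IsFractionRing.injective (MvPolynomial (Fin 2) ℚ) Kf
    rw [map_pow, map_mul, map_one]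
    exact h
  simpa [hn] using congrArg (MvPolynomial.eval 0) hpoly

/-- **Algebraic core of Theorem A.**  With
`M := (2JS − J²(1 + 2q^{g+1} − q²) − K(1-q)²)/(2(1-q)(1-q²))`
(the asserted Hodge polynomial of `M^s(2,d)`, `d` even), the Hodge polynomial of the
small-parameter triple moduli space (left-hand side) equals the sum over the stratification
computed in the proof of Theorem 4.3 (right-hand side). -/
theorem theoremA_algebraic_core (g : ℕ) (hg : 2 ≤ g) :
    Jg g ^ 2 / ((1 - qq) ^ 2 * (1 - qq ^ 2)) *
        (Sg g * (1 - qq ^ (2 * g)) +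
          Jg g * (qq ^ (3 * g - 1) + qq ^ (2 * g + 1) - qq ^ (2 * g - 1) - qq ^ (g + 1))) =
      ((2 * Jg g * Sg g - Jg g ^ 2 * (1 + 2 * qq ^ (g + 1) - qq ^ 2) -
            Kg g * (1 - qq) ^ 2) /
          (2 * (1 - qq) * (1 - qq ^ 2))) * Jg g * ee (2 * g) +
        Jg g ^ 2 * (Jg g - 1) * ee (g - 1) * (ee (2 * g) - ee g) +
        Jg g ^ 2 * ee g ^ 2 * (ee g - ee (g - 1)) +
        (1 / 2 : Kf) * Jg g *
          (Jg g ^ 2 * ee g ^ 2 + Kg g * (1 - qq ^ (2 * g)) / (1 - qq ^ 2)) -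
        (1 / 2 : Kf) * Jg g ^ 2 * (ee g ^ 2 + (1 - qq ^ (2 * g)) / (1 - qq ^ 2)) +
        Jg g ^ 2 * (1 - qq ^ (g - 1)) * (1 - qq ^ g) / ((1 - qq ^ 2) * (1 - qq)) :=
  theoremA_algebraic_core_general (qq_pow_ne_one two_ne_zero) (Jg g) (Sg g) (Kg g)
    (one_le_two.trans hg)

end
end

section
/- Let d1, d2 be integers with d1 + d2 odd. Then, as subsets of ℚ, { σ : ∃ dL ∈ ℤ, σ = (4·dL − d1 − d2)/2 and d1/2 < dL ≤ (3·d1 − d2)/4 } ∪ { σ : ∃ dF ∈ ℤ, σ = (d1 + d2 − 4·dF)/2 and (3·d2 − d1)/4 ≤ dF < d2/2 } = { (d1 − d2)/2 + n : n ∈ ℤ, 1 ≤ n ≤ (d1 − d2 − 1)/2 }. -/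
/-!
The numbers of the first family are `σ_m + n` with `n = 2 d_L - d₁`, and the bounds on `d_L` become
`1 ≤ n ≤ ⌊(d₁ - d₂) / 2⌋`: this family is the part of the progression where `n ≡ d₁ mod 2`.
Dualizing triples, `(d₁, d₂) ↦ (-d₂, -d₁)` and `d_L = -d_F`, turns the second family into the first,
so it is the part where `n ≡ d₂ mod 2`. When `d₁ + d₂` is odd, the two residue classes exhaust `ℤ`.
-/

section CriticalValues

variable (K : Type*) [Field K] [LinearOrder K] [IsStrictOrderedRing K] (d1 d2 : ℤ)

/-- The values of `σ` in `(σ_m, σ_M]`, with `σ_m = (d1 - d2) / 2` and `σ_M = d1 - d2`, at which a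
triple of rank `(1, 0)` and degree `dL` has the same `σ`-slope as a triple of rank `(2, 2)` and
degrees `(d1, d2)`. Both bounds on `σ` are expressed as bounds on `dL`. -/
def criticalValuesOneZero : Set K :=
  {σ | ∃ dL : ℤ, σ = (4 * (dL : K) - (d1 : K) - (d2 : K)) / 2 ∧
    (d1 : K) / 2 < (dL : K) ∧ (dL : K) ≤ (3 * (d1 : K) - (d2 : K)) / 4}

/-- The values of `σ` in `(σ_m, σ_M]`, with `σ_m = (d1 - d2) / 2` and `σ_M = d1 - d2`, at which a
triple of rank `(0, 1)` and degree `dF` has the same `σ`-slope as a triple of rank `(2, 2)` and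
degrees `(d1, d2)`. Both bounds on `σ` are expressed as bounds on `dF`. -/
def criticalValuesZeroOne : Set K :=
  {σ | ∃ dF : ℤ, σ = ((d1 : K) + (d2 : K) - 4 * (dF : K)) / 2 ∧
    (3 * (d2 : K) - (d1 : K)) / 4 ≤ (dF : K) ∧ (dF : K) < (d2 : K) / 2}

theorem criticalValuesZeroOne_eq_criticalValuesOneZero_neg :
    criticalValuesZeroOne K d1 d2 = criticalValuesOneZero K (-d2) (-d1) := by
  ext σ
  refine (Equiv.neg ℤ).exists_congr fun dF ↦ ?_
  rw [and_comm (a := _ ≤ _)]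
  simp only [Equiv.neg_apply, Int.cast_neg]
  refine and_congr ?_ (and_congr ?_ ?_)
  · ring_nf
  · rw [neg_div, neg_lt_neg_iff]
  · rw [neg_le, ← neg_div]
    ring_nf

theorem half_lt_and_le_iff_two_mul_sub_mem_Icc (dL : ℤ) :
    ((d1 : K) / 2 < dL ∧ (dL : K) ≤ (3 * d1 - d2) / 4) ↔
      2 * dL - d1 ∈ Set.Icc 1 ((d1 - d2) / 2) := by
  have lower : (d1 : K) / 2 < dL ↔ d1 < 2 * dL := by
    rw [div_lt_iff₀' two_pos]
    norm_cast
  have upper : (dL : K) ≤ (3 * d1 - d2) / 4 ↔ 4 * dL ≤ 3 * d1 - d2 := by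
    rw [le_div_iff₀' four_pos]
    norm_cast
  rw [lower, upper, Set.mem_Icc]
  omega

theorem criticalValuesOneZero_eq_image :
    criticalValuesOneZero K d1 d2 =
      (fun n : ℤ ↦ ((d1 : K) - d2) / 2 + n) ''
        {n ∈ Set.Icc 1 ((d1 - d2) / 2) | n ≡ d1 [ZMOD 2]} := by
  ext σ
  simp only [criticalValuesOneZero, half_lt_and_le_iff_two_mul_sub_mem_Icc, Set.mem_ofPred_eq,
    Set.mem_image]
  constructor
  · rintro ⟨dL, rfl, bounds⟩
    have parity : 2 * dL - d1 ≡ d1 [ZMOD 2] := Int.modEq_iff_dvd.mpr ⟨d1 - dL, by ring⟩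
    exact ⟨2 * dL - d1, ⟨bounds, parity⟩, by push_cast; ring⟩
  · rintro ⟨n, ⟨bounds, parity⟩, rfl⟩
    obtain ⟨k, hk⟩ := parity.dvd
    obtain rfl : n = 2 * (d1 - k) - d1 := by linarith
    exact ⟨d1 - k, by push_cast; ring, bounds⟩

theorem criticalValuesZeroOne_eq_image :
    criticalValuesZeroOne K d1 d2 =
      (fun n : ℤ ↦ ((d1 : K) - d2) / 2 + n) ''
        {n ∈ Set.Icc 1 ((d1 - d2) / 2) | n ≡ d2 [ZMOD 2]} := by
  have neg_parity (n : ℤ) : n ≡ -d2 [ZMOD 2] ↔ n ≡ d2 [ZMOD 2] := by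
    simp only [Int.ModEq, Int.neg_emod_two]
  rw [criticalValuesZeroOne_eq_criticalValuesOneZero_neg, criticalValuesOneZero_eq_image]
  simp only [Int.cast_neg, neg_sub_neg, neg_parity]

variable {d1 d2}

theorem modEq_two_or_modEq_two_of_odd_add (hodd : Odd (d1 + d2)) (n : ℤ) :
    n ≡ d1 [ZMOD 2] ∨ n ≡ d2 [ZMOD 2] := by
  rw [Int.odd_iff] at hodd
  simp only [Int.ModEq]
  omega

theorem le_ediv_two_iff_cast_le_of_odd {e : ℤ} (he : Odd e) (n : ℤ) :
    n ≤ e / 2 ↔ (n : K) ≤ ((e : K) - 1) / 2 := by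
  rw [le_div_iff₀' two_pos]
  norm_cast
  rw [Int.odd_iff] at he
  omega

theorem critical_values_22_general (hodd : Odd (d1 + d2)) :
    criticalValuesOneZero K d1 d2 ∪ criticalValuesZeroOne K d1 d2 =
      {σ : K | ∃ n : ℤ, σ = ((d1 : K) - (d2 : K)) / 2 + (n : K) ∧
        1 ≤ n ∧ (n : K) ≤ ((d1 : K) - (d2 : K) - 1) / 2} := by
  have residues_cover : {n ∈ Set.Icc 1 ((d1 - d2) / 2) | n ≡ d1 [ZMOD 2]} ∪
      {n ∈ Set.Icc 1 ((d1 - d2) / 2) | n ≡ d2 [ZMOD 2]} = Set.Icc 1 ((d1 - d2) / 2) := by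
    rw [← Set.sep_or]
    exact Set.sep_eq_self_iff_mem_true.mpr fun n _ ↦ modEq_two_or_modEq_two_of_odd_add hodd n
  rw [criticalValuesOneZero_eq_image, criticalValuesZeroOne_eq_image, ← Set.image_union,
    residues_cover]
  have hodd_sub : Odd (d1 - d2) := by rwa [Int.odd_sub, ← Int.odd_add]
  ext σ
  simp only [Set.mem_image, Set.mem_Icc, Set.mem_ofPred_eq,
    le_ediv_two_iff_cast_le_of_odd K hodd_sub, Int.cast_sub, and_comm, eq_comm]

end CriticalValues

/-- **Corollary 8.1 of the paper (arithmetic of critical values).**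
For integers `d₁, d₂` with `d₁ + d₂` odd, the set of critical values exceeding
`σ_m = (d₁-d₂)/2`, namely the numbers `(4d_L − d₁ − d₂)/2` with `d_L ∈ ℤ`,
`d₁/2 < d_L ≤ (3d₁-d₂)/4`, together with the numbers `(d₁ + d₂ − 4d_F)/2` with `d_F ∈ ℤ`,
`(3d₂-d₁)/4 ≤ d_F < d₂/2`, is exactly the arithmetic progression
`(d₁-d₂)/2 + n` for integers `1 ≤ n ≤ (d₁-d₂-1)/2`. -/
theorem critical_values_22 (d1 d2 : ℤ) (hodd : Odd (d1 + d2)) :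
    ({σ : ℚ | ∃ dL : ℤ,
        σ = (4 * (dL : ℚ) - (d1 : ℚ) - (d2 : ℚ)) / 2 ∧
        (d1 : ℚ) / 2 < (dL : ℚ) ∧ (dL : ℚ) ≤ (3 * (d1 : ℚ) - (d2 : ℚ)) / 4} ∪
      {σ : ℚ | ∃ dF : ℤ,
        σ = ((d1 : ℚ) + (d2 : ℚ) - 4 * (dF : ℚ)) / 2 ∧
        (3 * (d2 : ℚ) - (d1 : ℚ)) / 4 ≤ (dF : ℚ) ∧ (dF : ℚ) < (d2 : ℚ) / 2}) =
      {σ : ℚ | ∃ n : ℤ,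
        σ = ((d1 : ℚ) - (d2 : ℚ)) / 2 + (n : ℚ) ∧
        1 ≤ n ∧ (n : ℚ) ≤ ((d1 : ℚ) - (d2 : ℚ) - 1) / 2} :=
  critical_values_22_general ℚ hodd
end
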